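/- Let d ≥ 1, r ≥ 0 and let a = (a_1, …, a_ℓ) ∈ Red(w^{(d,r)}) be any reduced word, with reflection order ro(a) = (γ_1, …, γ_ℓ), ℓ = d(d+r). Then the filling B_a of D(Z(d,r)) defined by B_a(x) = the unique t with γ_t = f(x) is a balanced shifted tableau of shape Z(d,r). -/

import Mathlib

open scoped BigOperators

namespace BST

/-- `lam` (1-indexed, with `d` parts) is a strict partition: strictly decreasing
positive parts `lam 1 > lam 2 > ⋯ > lam d > 0`. -/
def IsStrictPartition (d : ℕ) (lam : ℕ → ℕ) : Prop :=
  (∀ i : ℕ, 1 ≤ i → i < d → lam (i + 1) < lam i) ∧ 1 ≤ lam d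

/-- The size `|λ| = λ_1 + ⋯ + λ_d`. -/
def sizeP (d : ℕ) (lam : ℕ → ℕ) : ℕ := ∑ i ∈ Finset.Icc 1 d, lam i

/-- The shifted diagram `D(λ) ⊆ ℤ × ℤ`: row `i` (1 ≤ i ≤ d) occupies columns
`i - d, …, λ_i + i - d - 1`. -/
def Diagram (d : ℕ) (lam : ℕ → ℕ) : Set (ℤ × ℤ) :=
  {p : ℤ × ℤ | 1 ≤ p.1 ∧ p.1 ≤ (d : ℤ) ∧ p.1 - (d : ℤ) ≤ p.2 ∧
    p.2 + (d : ℤ) + 1 ≤ (lam p.1.toNat : ℤ) + p.1}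

/-- The hook `H(i,c)`. -/
def Hook (d : ℕ) (lam : ℕ → ℕ) (i c : ℤ) : Set (ℤ × ℤ) :=
  {(i, c)} ∪ {p ∈ Diagram d lam | (p.1 = i ∧ c < p.2) ∨ (p.2 = c ∧ i < p.1)} ∪
    {p ∈ Diagram d lam | c < 0 ∧ p.1 = (d : ℤ) + 1 + c}

/-- The extended hook `H̃(i,c)`. -/
def ExtHook (d : ℕ) (lam : ℕ → ℕ) (i c : ℤ) : Set (ℤ × ℤ) :=
  Hook d lam i c ∪ {p : ℤ × ℤ | c < 0 ∧ p = ((d : ℤ) + 1 + c, c)}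

/-- The extended diagram `D(λ) ∪ {(i, i - d - 1) : 1 ≤ i ≤ d}`. -/
def ExtDiagram (d : ℕ) (lam : ℕ → ℕ) : Set (ℤ × ℤ) :=
  Diagram d lam ∪ {p : ℤ × ℤ | 1 ≤ p.1 ∧ p.1 ≤ (d : ℤ) ∧ p.2 = p.1 - ((d : ℤ) + 1)}

/-- The extended filling `B̃`, with `B̃(i, i - d - 1) = B(i, 0)`. -/
def ExtFilling (d : ℕ) (B : ℤ × ℤ → ℕ) : ℤ × ℤ → ℕ :=
  fun p => if p.2 = p.1 - ((d : ℤ) + 1) then B (p.1, 0) else B p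

/-- The rank function `rk(i,c)`. -/
def rk (d : ℕ) (lam : ℕ → ℕ) (i c : ℤ) : ℤ :=
  if 0 ≤ c then (lam i.toNat : ℤ) - d + i - c
  else (lam i.toNat : ℤ) - d + i + (lam ((d : ℤ) + 1 + c).toNat : ℤ) + c + 1

/-- A bijective filling of `D(λ)` with `1, …, |λ|` (normalized to be `0` off the diagram). -/
def IsFilling (d : ℕ) (lam : ℕ → ℕ) (B : ℤ × ℤ → ℕ) : Prop :=
  Set.BijOn B (Diagram d lam) (Set.Icc 1 (sizeP d lam)) ∧
    ∀ p : ℤ × ℤ, p ∉ Diagram d lam → B p = 0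

/-- A balanced shifted tableau: a bijective filling such that at each box `(i,c)`,
`B(i,c)` is the `rk(i,c)`-th largest entry of the multiset of values of `B̃` on the
extended hook, i.e. exactly `rk(i,c) - 1` boxes of the extended hook carry a value
strictly larger than `B(i,c)`. -/
def IsBalanced (d : ℕ) (lam : ℕ → ℕ) (B : ℤ × ℤ → ℕ) : Prop :=
  IsFilling d lam B ∧ ∀ p ∈ Diagram d lam,
    ({q ∈ ExtHook d lam p.1 p.2 | B p < ExtFilling d B q}.ncard : ℤ) =
      rk d lam p.1 p.2 - 1

/-- A standard Young tableau of shifted shape `λ`. -/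
def IsSYT (d : ℕ) (lam : ℕ → ℕ) (B : ℤ × ℤ → ℕ) : Prop :=
  IsFilling d lam B ∧ ∀ p ∈ Diagram d lam, ∀ q ∈ Diagram d lam,
    ((p.1 = q.1 ∧ p.2 < q.2) → B p < B q) ∧ ((p.2 = q.2 ∧ p.1 < q.1) → B p < B q)

/-- The simple reflections of `W(B_n)`, acting on `ℤ`: `s 0` swaps `1 ↔ -1`,
and `s a` (for `a ≥ 1`) swaps `a ↔ a+1` and `-a ↔ -(a+1)`. -/
def sB (a : ℕ) : Equiv.Perm ℤ :=
  if a = 0 then Equiv.swap 1 (-1)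
  else Equiv.swap (a : ℤ) ((a : ℤ) + 1) * Equiv.swap (-(a : ℤ)) (-(a : ℤ) - 1)

/-- The product `s_{a_1} s_{a_2} ⋯ s_{a_m}` of a word. -/
def wordProd (L : List ℕ) : Equiv.Perm ℤ := (L.map sB).prod

/-- A signed permutation in `W(B_n)`: odd, and the identity beyond `n`. -/
def IsSignedPerm (n : ℕ) (w : Equiv.Perm ℤ) : Prop :=
  (∀ i : ℤ, w (-i) = -(w i)) ∧ ∀ i : ℤ, (n : ℤ) < |i| → w i = i

/-- The Coxeter length of `w` in `W(B_n)`. -/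
noncomputable def lengthB (n : ℕ) (w : Equiv.Perm ℤ) : ℕ :=
  sInf {m : ℕ | ∃ L : List ℕ, (∀ a ∈ L, a < n) ∧ wordProd L = w ∧ L.length = m}

/-- `L` is a reduced word of `w` in `W(B_n)`. -/
def IsReducedWord (n : ℕ) (w : Equiv.Perm ℤ) (L : List ℕ) : Prop :=
  (∀ a ∈ L, a < n) ∧ wordProd L = w ∧ L.length = lengthB n w

/-- The vector `e_k` (for `k ≥ 1` the `k`-th standard basis vector, with the
conventions `e 0 = 0` and `e (-k) = - e k`), represented as an odd function `ℤ → ℤ`. -/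
def eVec (k : ℤ) : ℤ → ℤ :=
  fun t => if t = 0 then 0 else if t = k then 1 else if t = -k then -1 else 0

/-- The positive roots of type `B_n`. -/
def PosRoots (n : ℕ) : Set (ℤ → ℤ) :=
  {v | (∃ i j : ℤ, 1 ≤ i ∧ i < j ∧ j ≤ (n : ℤ) ∧
        (v = eVec j - eVec i ∨ v = eVec j + eVec i)) ∨
       (∃ i : ℤ, 1 ≤ i ∧ i ≤ (n : ℤ) ∧ v = eVec i)}

/-- The action of a signed permutation on vectors: `w · e_i = e_{w(i)}`. -/
def actB (w : Equiv.Perm ℤ) (v : ℤ → ℤ) : ℤ → ℤ := fun t => v (w⁻¹ t)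

/-- The inversion set `Inv(w) = {α ∈ Φ⁺ : w⁻¹ · α ∈ -Φ⁺}`. -/
def InvSet (n : ℕ) (w : Equiv.Perm ℤ) : Set (ℤ → ℤ) :=
  {α | α ∈ PosRoots n ∧ -(actB w⁻¹ α) ∈ PosRoots n}

/-- The simple roots: `α_0 = e_1` and `α_a = e_{a+1} - e_a` for `a ≥ 1`. -/
def alphaRoot (a : ℕ) : ℤ → ℤ :=
  if a = 0 then eVec 1 else eVec ((a : ℤ) + 1) - eVec (a : ℤ)

/-- The reflection order of a word: `reflOrder L t = γ_{t+1} = s_{a_1} ⋯ s_{a_t} · α_{a_{t+1}}`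
(0-indexed). -/
def reflOrder (L : List ℕ) (t : ℕ) : ℤ → ℤ :=
  actB (wordProd (L.take t)) (alphaRoot (L.getD t 0))

/-- The trapezoid `Z(d,r) = (r+2d-1, r+2d-3, …, r+1)`. -/
def Zlam (d r : ℕ) : ℕ → ℕ := fun i => r + 2 * d + 1 - 2 * i

/-- The labeling `f : D(Z(d,r)) → Φ⁺`. -/
def fLabel (d r : ℕ) (p : ℤ × ℤ) : ℤ → ℤ :=
  if p.2 ≤ 0 then eVec ((d : ℤ) + 1 - p.1) - eVec p.2
  else if p.2 ≤ (r : ℤ) then eVec ((d : ℤ) + 1 - p.1) + eVec (p.2 + (d : ℤ))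
  else eVec ((d : ℤ) + 1 - p.1) - eVec (p.2 - (r : ℤ))

/-- The extended labeling `f̃`, with `f̃(i, i - d - 1) = 2 e_{d+1-i}`. -/
def fExtLabel (d r : ℕ) (p : ℤ × ℤ) : ℤ → ℤ :=
  if p.2 = p.1 - ((d : ℤ) + 1) then (2 : ℤ) • eVec ((d : ℤ) + 1 - p.1)
  else fLabel d r p

/-- `w` is the signed permutation `w^{(d,r)} ∈ W(B_{d+r})`, i.e.
`w(i) = d + i` for `1 ≤ i ≤ r` and `w(i) = -(i - r)` for `r < i ≤ d + r`. -/
def IsWdr (d r : ℕ) (w : Equiv.Perm ℤ) : Prop :=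
  IsSignedPerm (d + r) w ∧
    (∀ i : ℤ, 1 ≤ i → i ≤ (r : ℤ) → w i = (d : ℤ) + i) ∧
    (∀ i : ℤ, (r : ℤ) < i → i ≤ (d : ℤ) + (r : ℤ) → w i = -(i - r))


/-- `x` lies strictly between `y` and `z` (i.e. `min(y,z) < x < max(y,z)`). -/
def Between (x y z : ℕ) : Prop := (y < x ∧ x < z) ∨ (z < x ∧ x < y)

/-- A nonempty list is unimodal: strictly decreasing down to its minimum
(at 0-indexed position `k`), then strictly increasing. -/
def Unimodal (L : List ℕ) : Prop :=
  ∃ k : ℕ, k < L.length ∧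
    (∀ a b : ℕ, a < b → b ≤ k → L.getD b 0 < L.getD a 0) ∧
    (∀ a b : ℕ, k ≤ a → a < b → b < L.length → L.getD a 0 < L.getD b 0)

/-- Row `i` of the distinguished tableau of shape `Z(d,r)`:
`(r+d-i, …, r+1, 0, 1, …, r+d-i)`. -/
def rowWord (d r i : ℕ) : List ℕ :=
  (List.range (r + 2 * (d - i) + 1)).map fun t =>
    if t < d - i then r + (d - i) - t else t - (d - i)

/-- The reading word `π(T) = T_d T_{d-1} ⋯ T_1` of the distinguished tableau of
shape `Z(d,r)`. -/
def piWord (d r : ℕ) : List ℕ :=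
  (List.range d).flatMap fun k => rowWord d r (d - k)

/-- `μ_i = Z(d,r)_i - λ_i`. -/
def muF (d r : ℕ) (lam : ℕ → ℕ) (i : ℕ) : ℕ := r + 2 * d + 1 - 2 * i - lam i

/-- `σ_i = μ_1 + ⋯ + μ_i`. -/
def sigmaF (d r : ℕ) (lam : ℕ → ℕ) (i : ℕ) : ℕ := ∑ t ∈ Finset.Icc 1 i, muF d r lam t

/-- `ν_i = min{μ_i, …, μ_d}`. -/
noncomputable def nuF (d r : ℕ) (lam : ℕ → ℕ) (i : ℕ) : ℕ :=
  sInf {m : ℕ | ∃ j : ℕ, i ≤ j ∧ j ≤ d ∧ m = muF d r lam j}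

/-- The word `a^λ`: the concatenation over `i = 1, …, d` of the increasing runs
`(d+r-i-μ_i+1, …, d+r-i)`. -/
def aLamWord (d r : ℕ) (lam : ℕ → ℕ) : List ℕ :=
  (List.range d).flatMap fun k =>
    (List.range (muF d r lam (k + 1))).map fun t =>
      d + r - (k + 1) - muF d r lam (k + 1) + 1 + t

/-- Row `i` of the tableau `P(w^λ)`: entries `P(i,c) = c` for `c ≥ 0` and
`P(i,c) = r - c - ν_{d+1+c}` for `c < 0`. -/
noncomputable def rowWordP (d r : ℕ) (lam : ℕ → ℕ) (i : ℕ) : List ℕ :=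
  (List.range (lam i)).map fun t =>
    if t < d - i then r + (d - i) - t - nuF d r lam (i + 1 + t) else t - (d - i)

/-- The reading word `π(P(w^λ))`. -/
noncomputable def piWordP (d r : ℕ) (lam : ℕ → ℕ) : List ℕ :=
  (List.range d).flatMap fun k => rowWordP d r lam (d - k)

/-- The shape obtained from `λ` by adding one box at the end of row `i`. -/
def stepShape (lam : ℕ → ℕ) (i : ℕ) : ℕ → ℕ :=
  fun t => if t = i then lam i + 1 else lam t

/-- The box-adding map `f_i` on fillings: swap columns `j = λ_i + i - d` and `j + 1`
(in rows `1, …, i-1`), and put the value `N + 1` in the new box `(i, j)`. -/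
def addBox (d : ℕ) (lam : ℕ → ℕ) (i : ℕ) (N : ℕ) (B : ℤ × ℤ → ℕ) : ℤ × ℤ → ℕ :=
  fun p =>
    if p = ((i : ℤ), (lam i : ℤ) + (i : ℤ) - (d : ℤ)) then N + 1
    else if 1 ≤ p.1 ∧ p.1 < (i : ℤ) ∧ p.2 = (lam i : ℤ) + (i : ℤ) - (d : ℤ) then
      B (p.1, p.2 + 1)
    else if 1 ≤ p.1 ∧ p.1 < (i : ℤ) ∧ p.2 = (lam i : ℤ) + (i : ℤ) - (d : ℤ) + 1 then
      B (p.1, p.2 - 1)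
    else B p

/-- Successively apply the box-adding maps along a list of row indices,
tracking the current shape. -/
def FmapAux (d : ℕ) : List ℕ → (ℕ → ℕ) → (ℤ × ℤ → ℕ) → (ℤ × ℤ → ℕ)
  | [], _, B => B
  | i :: rest, lam, B => FmapAux d rest (stepShape lam i) (addBox d lam i (sizeP d lam) B)

/-- The shape after successively adding boxes along a list of row indices. -/
def shapeAux : List ℕ → (ℕ → ℕ) → (ℕ → ℕ)
  | [], lam => lam
  | i :: rest, lam => shapeAux rest (stepShape lam i)

/-- The list of row indices `1^{μ_1} 2^{μ_2} ⋯ d^{μ_d}` used to pad `λ` to `Z(d,r)`. -/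
def rowsList (d r : ℕ) (lam : ℕ → ℕ) : List ℕ :=
  (List.range d).flatMap fun k => List.replicate (muF d r lam (k + 1)) (k + 1)

/-- `BS(Z(d,r))|_λ`: balanced tableaux of shape `Z(d,r)` such that for each
`i ∈ {1,…,d}` the entries `N + σ_{i-1} + 1, …, N + σ_i` all occur in row `i`. -/
def BSRestricted (d r : ℕ) (lam : ℕ → ℕ) : Set (ℤ × ℤ → ℕ) :=
  {T | IsBalanced d (Zlam d r) T ∧ ∀ i : ℕ, 1 ≤ i → i ≤ d →
    ∀ k : ℕ, sizeP d lam + sigmaF d r lam (i - 1) + 1 ≤ k →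
      k ≤ sizeP d lam + sigmaF d r lam i →
      ∃ c : ℤ, ((i : ℤ), c) ∈ Diagram d (Zlam d r) ∧ T ((i : ℤ), c) = k}

/-- `w ∈ W(B_n)` pattern embeds the signed pattern `v` (given as its one-line
notation, a list of nonzero integers). -/
def PatternEmbeds (n : ℕ) (w : Equiv.Perm ℤ) (v : List ℤ) : Prop :=
  ∃ idx : Fin v.length → ℤ, StrictMono idx ∧
    (∀ j, 1 ≤ idx j ∧ idx j ≤ (n : ℤ)) ∧
    (∀ j, 0 < w (idx j) ↔ 0 < v.get j) ∧
    (∀ j k, |w (idx j)| < |w (idx k)| ↔ |v.get j| < |v.get k|)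

/-!
Write every label as `f(i,c) = e_x - e_b` with `b < x`, where `x` depends only on the row
`i` and `b` only on the column `c`. Reading a reduced word `a` letter by letter,
`γ_t = e_x - e_b` says that `x` and `b`, adjacent in one-line notation, change places at step `t`,
after which `x` is immediately to the left of `b`. In a reduced word no such pair changes
places twice, since the two letters involved would define the same reflection and could be
deleted together.

For `w = w^{(d,r)}` the rank `rk(i,c)` is `w⁻¹(b) - w⁻¹(x)`, so exactly `rk(i,c) - 1` values
`m` end up strictly between `x` and `b` in `w`. At step `T = B_a(i,c)` such an `m` lies
either to the left of `x` or to the right of `b`. In the first case `m < x`, and the pair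
`(x, m)`, which labels a box of row `i` to the right of `(i,c)`, still has to change places;
in the second case `b < m` and the same holds for `(m, b)`, which labels a box of the rest
of the extended hook. So each of these `m` contributes exactly one box with an entry larger
than `T`, and every such box arises in this way.
-/

/-! ### Reduced words and positions -/

lemma sB_zero_apply (z : ℤ) : sB 0 z = if z = 1 then -1 else if z = -1 then 1 else z := by
  simp only [sB, if_true, Equiv.swap_apply_def]

lemma sB_pos_apply {k : ℕ} (hk : 0 < k) (z : ℤ) :
    sB k z = if z = k then (k : ℤ) + 1 else if z = k + 1 then (k : ℤ)
      else if z = -k then -(k : ℤ) - 1 else if z = -k - 1 then -(k : ℤ) else z := by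
  simp only [sB, hk.ne', if_false, Equiv.Perm.mul_apply, Equiv.swap_apply_def]
  split_ifs <;> omega

lemma odd_sB (k : ℕ) : Function.Odd (sB k) := by
  intro z
  obtain rfl | hk := k.eq_zero_or_pos
  · simp only [sB_zero_apply]; split_ifs <;> omega
  · simp only [sB_pos_apply hk]; split_ifs <;> omega

lemma sB_mul_self (k : ℕ) : sB k * sB k = 1 := by
  ext z
  rw [Equiv.Perm.mul_apply, Equiv.Perm.one_apply]
  obtain rfl | hk := k.eq_zero_or_pos
  · simp only [sB_zero_apply]; grind
  · simp only [sB_pos_apply hk]; grind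

lemma sB_inv (k : ℕ) : (sB k)⁻¹ = sB k :=
  inv_eq_of_mul_eq_one_left (sB_mul_self k)

lemma odd_perm_inv {u : Equiv.Perm ℤ} (hu : Function.Odd u) : Function.Odd ⇑u⁻¹ := fun z ↦ by
  rw [Equiv.Perm.inv_eq_iff_eq, hu, Equiv.Perm.inv_def, Equiv.apply_symm_apply]

lemma wordProd_append (K L : List ℕ) : wordProd (K ++ L) = wordProd K * wordProd L := by
  simp only [wordProd, List.map_append, List.prod_append]

lemma wordProd_cons (k : ℕ) (L : List ℕ) : wordProd (k :: L) = sB k * wordProd L := by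
  simp only [wordProd, List.map_cons, List.prod_cons]

lemma wordProd_singleton (k : ℕ) : wordProd [k] = sB k := List.prod_singleton

lemma odd_wordProd (L : List ℕ) : Function.Odd (wordProd L) := by
  induction L with
  | nil => exact fun _ ↦ rfl
  | cons k L ih =>
    intro z
    rw [wordProd_cons, Equiv.Perm.mul_apply, Equiv.Perm.mul_apply, ih, odd_sB]

/-- The reflection of `W(B_n)` exchanging the nonzero values `p` and `q`, and hence also `-p` and
`-q`. -/
def signedSwap (p q : ℤ) : Equiv.Perm ℤ :=
  if p = -q then Equiv.swap p q else Equiv.swap p q * Equiv.swap (-p) (-q)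

lemma signedSwap_comm (p q : ℤ) : signedSwap p q = signedSwap q p := by
  have h : p = -q ↔ q = -p := by omega
  simp only [signedSwap, h, Equiv.swap_comm p, Equiv.swap_comm (-p)]

lemma signedSwap_apply_apply {u : Equiv.Perm ℤ} (hu : Function.Odd u) (p q : ℤ) :
    signedSwap (u p) (u q) = u * signedSwap p q * u⁻¹ := by
  simp only [signedSwap, ← hu _, u.injective.eq_iff, Equiv.swap_apply_apply]
  split_ifs
  · rfl
  · group

lemma sB_eq_signedSwap {k : ℕ} {p q : ℤ} (hp : p ≠ 0) (hq : q ≠ 0) (hqp : q < p)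
    (h : sB k p < sB k q) : sB k = signedSwap p q := by
  obtain rfl | hk := k.eq_zero_or_pos
  · simp only [sB_zero_apply] at h
    obtain ⟨rfl, rfl⟩ : p = 1 ∧ q = -1 := by split_ifs at h <;> omega
    rfl
  · simp only [sB_pos_apply hk] at h
    have hpq : p = k + 1 ∧ q = k ∨ p = -k ∧ q = -k - 1 := by split_ifs at h <;> omega
    ext z
    rw [signedSwap, if_neg (by omega), sB_pos_apply hk, Equiv.Perm.mul_apply]
    simp only [Equiv.swap_apply_def]
    obtain ⟨rfl, rfl⟩ | ⟨rfl, rfl⟩ := hpq <;> split_ifs <;> omega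

/-- The reflection `s_{a_1} ⋯ s_{a_t} s_{a_{t+1}} s_{a_t} ⋯ s_{a_1}` in the root `reflOrder L t`. -/
def reflAt (L : List ℕ) (t : ℕ) : Equiv.Perm ℤ :=
  wordProd (L.take t) * sB (L.getD t 0) * (wordProd (L.take t))⁻¹

lemma reflAt_mul_self (L : List ℕ) (t : ℕ) : reflAt L t * reflAt L t = 1 := by
  calc reflAt L t * reflAt L t
      = wordProd (L.take t) * (sB (L.getD t 0) * sB (L.getD t 0)) * (wordProd (L.take t))⁻¹ := by
        rw [reflAt]; group
    _ = 1 := by rw [sB_mul_self]; group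

lemma reflAt_mul_wordProd {L : List ℕ} {t : ℕ} (ht : t < L.length) :
    reflAt L t * wordProd L = wordProd (L.eraseIdx t) := by
  have hL : wordProd L = wordProd (L.take t) * (sB (L.getD t 0) * wordProd (L.drop (t + 1))) := by
    rw [List.getD_eq_getElem _ _ ht, ← wordProd_cons, List.getElem_cons_drop, ← wordProd_append,
      List.take_append_drop]
  calc reflAt L t * wordProd L
      = wordProd (L.take t) * (sB (L.getD t 0) * sB (L.getD t 0)) * wordProd (L.drop (t + 1)) := by
        rw [hL, reflAt]; group
    _ = wordProd (L.eraseIdx t) := by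
        rw [sB_mul_self, mul_one, ← wordProd_append, List.eraseIdx_eq_take_drop_succ]

lemma reflAt_eraseIdx_of_lt {L : List ℕ} {s t : ℕ} (hst : s < t) :
    reflAt (L.eraseIdx t) s = reflAt L s := by
  have htake : (L.eraseIdx t).take s = L.take s := by
    rw [List.take_eraseIdx_eq_take_of_le _ _ _ hst.le]
  rw [reflAt, reflAt, htake, List.getD_eq_getElem?_getD, List.getElem?_eraseIdx_of_lt hst,
    ← List.getD_eq_getElem?_getD]

lemma lengthB_le_length {n : ℕ} {L : List ℕ} (hL : ∀ a ∈ L, a < n) :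
    lengthB n (wordProd L) ≤ L.length :=
  Nat.sInf_le ⟨L, hL, rfl, rfl⟩

lemma IsReducedWord.reflAt_ne {n : ℕ} {w : Equiv.Perm ℤ} {L : List ℕ} (hL : IsReducedWord n w L)
    {s t : ℕ} (hst : s < t) (ht : t < L.length) : reflAt L s ≠ reflAt L t := by
  intro heq
  obtain ⟨hletters, hprod, hlen⟩ := hL
  set K := (L.eraseIdx t).eraseIdx s
  have hL' : (L.eraseIdx t).length + 1 = L.length := List.length_eraseIdx_add_one ht
  have hK : K.length + 1 = (L.eraseIdx t).length := List.length_eraseIdx_add_one (by omega)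
  have hKprod : wordProd K = w := by
    rw [← reflAt_mul_wordProd (by omega), reflAt_eraseIdx_of_lt hst, ← reflAt_mul_wordProd ht,
      heq, ← mul_assoc, reflAt_mul_self, one_mul, hprod]
  have hmin : lengthB n w ≤ K.length := by
    rw [← hKprod]
    exact lengthB_le_length fun a ha ↦
      hletters a (List.mem_of_mem_eraseIdx (List.mem_of_mem_eraseIdx ha))
  omega

/-- The position of the value `a` in the one-line notation of the prefix product
`s_{a_1} ⋯ s_{a_t}` of `L`. -/
def pos (L : List ℕ) (t : ℕ) (a : ℤ) : ℤ := (wordProd (L.take t))⁻¹ a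

lemma pos_injective (L : List ℕ) (t : ℕ) : Function.Injective (pos L t) :=
  (wordProd (L.take t))⁻¹.injective

lemma odd_pos (L : List ℕ) (t : ℕ) : Function.Odd (pos L t) :=
  odd_perm_inv (odd_wordProd _)

lemma pos_apply_zero (L : List ℕ) (t : ℕ) : pos L t 0 = 0 :=
  (odd_pos L t).map_zero

lemma pos_ne_zero (L : List ℕ) (t : ℕ) {a : ℤ} (ha : a ≠ 0) : pos L t a ≠ 0 := fun h ↦
  ha (pos_injective L t (h.trans (pos_apply_zero L t).symm))

lemma pos_zero (L : List ℕ) (a : ℤ) : pos L 0 a = a := rfl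

lemma pos_of_length_le {L : List ℕ} {t : ℕ} (ht : L.length ≤ t) (a : ℤ) :
    pos L t a = (wordProd L)⁻¹ a := by
  rw [pos, List.take_of_length_le ht]

lemma pos_succ {L : List ℕ} {t : ℕ} (ht : t < L.length) (a : ℤ) :
    pos L (t + 1) a = sB (L.getD t 0) (pos L t a) := by
  have htake : wordProd (L.take (t + 1)) = wordProd (L.take t) * sB (L.getD t 0) := by
    rw [List.take_succ_eq_append_getElem ht, wordProd_append, List.getD_eq_getElem _ _ ht,
      wordProd_singleton]
  rw [pos, htake, mul_inv_rev, sB_inv, Equiv.Perm.mul_apply, pos]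

lemma wordProd_take_pos (L : List ℕ) (t : ℕ) (a : ℤ) : wordProd (L.take t) (pos L t a) = a :=
  Equiv.apply_symm_apply _ _

lemma pos_wordProd_take (L : List ℕ) (t : ℕ) (a : ℤ) : pos L t (wordProd (L.take t) a) = a :=
  Equiv.symm_apply_apply _ _

lemma reflAt_eq_signedSwap {L : List ℕ} {t : ℕ} (ht : t < L.length) {a b : ℤ} (ha : a ≠ 0)
    (hb : b ≠ 0) (h : pos L t b < pos L t a) (h' : pos L (t + 1) a < pos L (t + 1) b) :
    reflAt L t = signedSwap a b := by
  rw [pos_succ ht, pos_succ ht] at h'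
  rw [reflAt, sB_eq_signedSwap (pos_ne_zero L t ha) (pos_ne_zero L t hb) h h',
    ← signedSwap_apply_apply (odd_wordProd _), wordProd_take_pos, wordProd_take_pos]

lemma exists_between_not_and_succ {P : ℕ → Prop} {s t : ℕ} (hst : s ≤ t) (hs : ¬P s) (ht : P t) :
    ∃ i, s ≤ i ∧ i < t ∧ ¬P i ∧ P (i + 1) := by
  induction t, hst using Nat.le_induction with
  | base => exact absurd ht hs
  | succ t hst ih =>
    by_cases hPt : P t
    · obtain ⟨i, hsi, hit, hi⟩ := ih hPt
      exact ⟨i, hsi, hit.trans t.lt_succ_self, hi⟩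
    · exact ⟨t, hst, t.lt_succ_self, hPt, ht⟩

lemma pos_lt_pos_of_le_of_ne_zero {n : ℕ} {w : Equiv.Perm ℤ} {L : List ℕ}
    (hL : IsReducedWord n w L) {s t : ℕ} (hst : s ≤ t) (ht : t ≤ L.length) {a b : ℤ} (hba : b < a)
    (ha : a ≠ 0) (hb : b ≠ 0) (h : pos L s a < pos L s b) : pos L t a < pos L t b := by
  have lt_of_not_lt : ∀ i, ¬pos L i a < pos L i b → pos L i b < pos L i a := fun i hi ↦
    lt_of_le_of_ne (not_lt.1 hi) ((pos_injective L i).ne hba.ne)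
  by_contra hcross
  obtain ⟨i, -, his, hi, hi'⟩ := exists_between_not_and_succ (P := fun i ↦ pos L i a < pos L i b)
    s.zero_le (by simpa only [pos_zero] using hba.not_gt) h
  obtain ⟨j, hsj, hjt, hj, hj'⟩ :=
    exists_between_not_and_succ (P := fun j ↦ ¬pos L j a < pos L j b) hst (not_not.2 h) hcross
  refine hL.reflAt_ne (his.trans_le hsj) (by omega) ?_
  rw [reflAt_eq_signedSwap (by omega) ha hb (lt_of_not_lt i hi) hi', signedSwap_comm,
    reflAt_eq_signedSwap (by omega) hb ha (not_not.1 hj) (lt_of_not_lt _ hj')]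

lemma pos_lt_pos_neg_iff (L : List ℕ) (t : ℕ) (a : ℤ) :
    pos L t a < pos L t (-a) ↔ pos L t a < pos L t 0 := by
  rw [odd_pos, pos_apply_zero]
  omega

lemma pos_neg_lt_pos_neg_iff (L : List ℕ) (t : ℕ) (a b : ℤ) :
    pos L t (-a) < pos L t (-b) ↔ pos L t b < pos L t a := by
  rw [odd_pos, odd_pos, neg_lt_neg_iff]

theorem pos_lt_pos_of_le {n : ℕ} {w : Equiv.Perm ℤ} {L : List ℕ} (hL : IsReducedWord n w L)
    {s t : ℕ} (hst : s ≤ t) (ht : t ≤ L.length) {a b : ℤ} (hba : b < a)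
    (h : pos L s a < pos L s b) : pos L t a < pos L t b := by
  have neg_lt : ∀ {c : ℤ}, 0 < c → pos L s c < pos L s (-c) → pos L t c < pos L t (-c) :=
    fun hc ↦ pos_lt_pos_of_le_of_ne_zero hL hst ht (by omega) (by omega) (by omega)
  obtain rfl | hb := eq_or_ne b 0
  · rw [← pos_lt_pos_neg_iff] at h ⊢
    exact neg_lt hba h
  obtain rfl | ha := eq_or_ne a 0
  · rw [← neg_zero, ← neg_neg b, pos_neg_lt_pos_neg_iff, ← pos_lt_pos_neg_iff] at h ⊢
    exact neg_lt (by omega) h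
  · exact pos_lt_pos_of_le_of_ne_zero hL hst ht hba ha hb h

lemma lt_of_pos_lt_of_inv_lt {n : ℕ} {w : Equiv.Perm ℤ} {L : List ℕ} (hL : IsReducedWord n w L)
    {t : ℕ} (ht : t ≤ L.length) {a b : ℤ} (hpos : pos L t a < pos L t b)
    (hinv : w⁻¹ b < w⁻¹ a) : a < b := by
  by_contra! hba
  obtain rfl | hba := hba.eq_or_lt
  · exact hinv.false
  · have := pos_lt_pos_of_le hL ht le_rfl hba hpos
    rw [pos_of_length_le le_rfl, pos_of_length_le le_rfl, hL.2.1] at this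
    exact this.not_gt hinv

/-! ### Roots as differences `e_x - e_b` -/

lemma eVec_neg (k : ℤ) : eVec (-k) = -eVec k := by
  funext t
  simp only [eVec, Pi.neg_apply]
  split_ifs <;> omega

lemma eVec_zero : eVec 0 = 0 := by
  funext t
  simp only [eVec, neg_zero, Pi.zero_apply]
  split_ifs <;> rfl

lemma eVec_sub_eVec_inj {p q x b : ℤ} (hpq : p ≠ q) (hpq' : p ≠ -q) (hp : p ≠ 0)
    (h : eVec p - eVec q = eVec x - eVec b) : p = x ∧ q = b ∨ p = -b ∧ q = -x := by
  have at_p := congrFun h p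
  have at_q := congrFun h q
  have at_x := congrFun h x
  have at_b := congrFun h b
  simp only [eVec, Pi.sub_apply] at at_p at_q at_x at_b
  grind (splits := 20)

lemma actB_eVec {u : Equiv.Perm ℤ} (hu : Function.Odd u) (k : ℤ) :
    actB u (eVec k) = eVec (u k) := by
  funext t
  have h_zero : u⁻¹ t = 0 ↔ t = 0 := by rw [Equiv.Perm.inv_eq_iff_eq, hu.map_zero]
  have h_neg : u⁻¹ t = -k ↔ t = -u k := by rw [Equiv.Perm.inv_eq_iff_eq, hu]
  simp only [actB, eVec, h_zero, h_neg, Equiv.Perm.inv_eq_iff_eq]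

lemma alphaRoot_eq (k : ℕ) : alphaRoot k = eVec ((k : ℤ) + 1) - eVec k := by
  obtain rfl | hk := eq_or_ne k 0
  · rw [Nat.cast_zero, eVec_zero, sub_zero]; rfl
  · exact if_neg hk

lemma reflOrder_eq (L : List ℕ) (t : ℕ) :
    reflOrder L t = eVec (wordProd (L.take t) ((L.getD t 0 : ℕ) + 1)) -
      eVec (wordProd (L.take t) (L.getD t 0 : ℕ)) := by
  rw [← actB_eVec (odd_wordProd _), ← actB_eVec (odd_wordProd _), reflOrder, alphaRoot_eq]
  rfl

lemma pos_of_reflOrder_eq {L : List ℕ} {t : ℕ} {x b : ℤ}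
    (h : reflOrder L t = eVec x - eVec b) :
    (pos L t x = (L.getD t 0 : ℕ) + 1 ∧ pos L t b = (L.getD t 0 : ℕ)) ∨
      (pos L t b = -((L.getD t 0 : ℕ) + 1) ∧ pos L t x = -(L.getD t 0 : ℕ)) := by
  have hodd := odd_wordProd (L.take t)
  have hinj := (wordProd (L.take t)).injective
  rw [reflOrder_eq] at h
  have hxb := eVec_sub_eVec_inj (hinj.ne (by omega)) (by rw [← hodd]; exact hinj.ne (by omega))
    (by rw [← hodd.map_zero]; exact hinj.ne (by omega)) h
  refine hxb.imp (fun ⟨hx, hb⟩ ↦ ?_) fun ⟨hb, hx⟩ ↦ ?_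
  · rw [← hx, ← hb, pos_wordProd_take, pos_wordProd_take]
    exact ⟨rfl, rfl⟩
  · rw [← neg_eq_iff_eq_neg, ← hodd] at hb hx
    rw [← hx, ← hb, pos_wordProd_take, pos_wordProd_take]
    exact ⟨rfl, rfl⟩

section Crossing

variable {n : ℕ} {w : Equiv.Perm ℤ} {L : List ℕ} {t : ℕ} {x b : ℤ}

lemma lt_length_of_reflOrder_eq (hprod : wordProd L = w) (hinv : w⁻¹ x < w⁻¹ b)
    (h : reflOrder L t = eVec x - eVec b) : t < L.length := by
  by_contra! ht
  have := pos_of_reflOrder_eq h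
  rw [pos_of_length_le ht, pos_of_length_le ht, hprod] at this
  omega

lemma pos_succ_of_reflOrder_eq (ht : t < L.length) (h : reflOrder L t = eVec x - eVec b) :
    pos L (t + 1) b = pos L (t + 1) x + 1 := by
  have hpos := pos_of_reflOrder_eq h
  rw [pos_succ ht, pos_succ ht]
  generalize L.getD t 0 = k at hpos ⊢
  obtain rfl | hk := k.eq_zero_or_pos
  · simp only [sB_zero_apply]; split_ifs <;> omega
  · simp only [sB_pos_apply hk]; split_ifs <;> omega

theorem pos_lt_pos_iff_of_reflOrder_eq (hL : IsReducedWord n w L) (hbx : b < x)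
    (hinv : w⁻¹ x < w⁻¹ b) (h : reflOrder L t = eVec x - eVec b) {s : ℕ} (hs : s ≤ L.length) :
    pos L s x < pos L s b ↔ t + 1 ≤ s := by
  have ht := lt_length_of_reflOrder_eq hL.2.1 hinv h
  constructor
  · intro hlt
    by_contra! hst
    have := pos_lt_pos_of_le hL (Nat.lt_succ_iff.1 hst) ht.le hbx hlt
    have := pos_of_reflOrder_eq h
    omega
  · intro hts
    have := pos_succ_of_reflOrder_eq ht h
    exact pos_lt_pos_of_le hL hts hs hbx (by omega)

end Crossing

/-! ### The trapezoid -/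

lemma mem_diagram_Zlam {d r : ℕ} {q : ℤ × ℤ} :
    q ∈ Diagram d (Zlam d r) ↔ 1 ≤ q.1 ∧ q.1 ≤ d ∧ q.1 - d ≤ q.2 ∧ q.2 + q.1 ≤ r + d := by
  simp only [Diagram, Zlam, Set.mem_ofPred_eq]
  omega

/-- The index `x` for which the boxes of row `i` have labels of the form `e_x - e_b`. -/
def rowVal (d : ℕ) (i : ℤ) : ℤ := d + 1 - i

/-- The signed index `b` for which the boxes of column `c` have labels of the form `e_x - e_b`. -/
def colVal (d r : ℕ) (c : ℤ) : ℤ := if c ≤ 0 then c else if c ≤ r then -(c + d) else c - r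

lemma fLabel_eq (d r : ℕ) (q : ℤ × ℤ) :
    fLabel d r q = eVec (rowVal d q.1) - eVec (colVal d r q.2) := by
  simp only [fLabel, rowVal, colVal]
  split_ifs
  · rfl
  · rw [eVec_neg, sub_neg_eq_add]
  · rfl

lemma fLabel_injOn (d r : ℕ) : Set.InjOn (fLabel d r) (Diagram d (Zlam d r)) := by
  intro q hq q' hq' h
  rw [mem_diagram_Zlam] at hq hq'
  rw [fLabel_eq, fLabel_eq] at h
  simp only [rowVal, colVal] at h
  have := eVec_sub_eVec_inj (by split_ifs <;> omega) (by split_ifs <;> omega) (by omega) h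
  ext <;> split_ifs at this <;> omega

lemma ncard_diagram (d : ℕ) (lam : ℕ → ℕ) : (Diagram d lam).ncard = sizeP d lam := by
  have hbij : Set.BijOn (fun s : Σ _ : ℕ, ℕ ↦ ((s.1 : ℤ), (s.2 : ℤ) + s.1 - d))
      ((Finset.Icc 1 d).sigma fun i ↦ Finset.range (lam i)) (Diagram d lam) := by
    refine ⟨fun s hs ↦ ?_, fun s _ s' _ h ↦ ?_, fun q hq ↦ ?_⟩
    · simp only [Finset.coe_sigma, Set.mem_sigma_iff, Finset.coe_Icc, Set.mem_Icc,
        Finset.coe_range, Set.mem_Iio] at hs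
      simp only [Diagram, Set.mem_ofPred_eq, Int.toNat_natCast]
      omega
    · rw [Prod.mk.injEq] at h
      exact Sigma.ext (by omega) (heq_of_eq (by omega))
    · simp only [Diagram, Set.mem_ofPred_eq] at hq
      refine ⟨⟨q.1.toNat, (q.2 + d - q.1).toNat⟩, ?_, Prod.ext ?_ ?_⟩
      · simp only [Finset.coe_sigma, Set.mem_sigma_iff, Finset.coe_Icc, Set.mem_Icc,
          Finset.coe_range, Set.mem_Iio]
        omega
      · simp only; omega
      · simp only; omega
  rw [← hbij.ncard_eq, Set.ncard_coe_finset, Finset.card_sigma]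
  simp only [Finset.card_range, sizeP]

lemma IsWdr.inv_apply {d r : ℕ} {w : Equiv.Perm ℤ} (hw : IsWdr d r w) (m : ℤ) :
    w⁻¹ m = if 1 ≤ m ∧ m ≤ d then -(r + m) else if -d ≤ m ∧ m ≤ -1 then r - m
      else if d < m ∧ m ≤ d + r then m - d else if -(d + r) ≤ m ∧ m < -d then m + d else m := by
  obtain ⟨⟨hodd, hfix⟩, hsmall, hlarge⟩ := hw
  rw [Equiv.Perm.inv_eq_iff_eq]
  split_ifs
  · rw [hodd, hlarge _ (by omega) (by omega)]; omega
  · rw [hlarge _ (by omega) (by omega)]; omega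
  · rw [hsmall _ (by omega) (by omega)]; omega
  · rw [← neg_neg (m + d), hodd, hsmall _ (by omega) (by omega)]; omega
  · obtain rfl | hm := eq_or_ne m 0
    · exact (Function.Odd.map_zero hodd).symm
    · exact (hfix m (by rw [lt_abs]; omega)).symm

section Box

variable {d r : ℕ} {w : Equiv.Perm ℤ} {q : ℤ × ℤ}

lemma colVal_lt_rowVal (hq : q ∈ Diagram d (Zlam d r)) : colVal d r q.2 < rowVal d q.1 := by
  rw [mem_diagram_Zlam] at hq
  simp only [rowVal, colVal]
  split_ifs <;> omega

lemma IsWdr.inv_rowVal (hw : IsWdr d r w) (hq : q ∈ Diagram d (Zlam d r)) :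
    w⁻¹ (rowVal d q.1) = -(r + rowVal d q.1) := by
  rw [mem_diagram_Zlam] at hq
  rw [hw.inv_apply, if_pos]
  simp only [rowVal]
  omega

lemma IsWdr.inv_colVal (hw : IsWdr d r w) (hq : q ∈ Diagram d (Zlam d r)) :
    w⁻¹ (colVal d r q.2) = if 0 ≤ q.2 then -q.2 else r - q.2 := by
  rw [mem_diagram_Zlam] at hq
  rw [hw.inv_apply]
  simp only [colVal]
  split_ifs <;> omega

lemma IsWdr.inv_rowVal_lt_inv_colVal (hw : IsWdr d r w) (hq : q ∈ Diagram d (Zlam d r)) :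
    w⁻¹ (rowVal d q.1) < w⁻¹ (colVal d r q.2) := by
  rw [hw.inv_rowVal hq, hw.inv_colVal hq]
  rw [mem_diagram_Zlam] at hq
  simp only [rowVal]
  split_ifs <;> omega

lemma IsWdr.rk_eq (hw : IsWdr d r w) (hq : q ∈ Diagram d (Zlam d r)) :
    rk d (Zlam d r) q.1 q.2 = w⁻¹ (colVal d r q.2) - w⁻¹ (rowVal d q.1) := by
  rw [hw.inv_rowVal hq, hw.inv_colVal hq]
  rw [mem_diagram_Zlam] at hq
  simp only [rk, rowVal, Zlam]
  split_ifs <;> omega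

end Box

/-! ### Arms and legs -/

/-- The values that stand strictly between `x` and `b` in the one-line notation of `w`. -/
def valuesBetween (w : Equiv.Perm ℤ) (x b : ℤ) : Set ℤ := {m | w⁻¹ m ∈ Set.Ioo (w⁻¹ x) (w⁻¹ b)}

lemma ncard_valuesBetween {w : Equiv.Perm ℤ} {x b : ℤ} (h : w⁻¹ x < w⁻¹ b) :
    ((valuesBetween w x b).ncard : ℤ) = w⁻¹ b - w⁻¹ x - 1 := by
  have hpreimage : (valuesBetween w x b).ncard = (Set.Ioo (w⁻¹ x) (w⁻¹ b)).ncard :=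
    Set.ncard_preimage_of_injective_subset_range w⁻¹.injective fun m _ ↦ w⁻¹.surjective m
  rw [hpreimage, ← Finset.coe_Ioo, Set.ncard_coe_finset, Int.card_Ioo_of_lt _ _ h]

lemma valuesBetween_eq_union (w : Equiv.Perm ℤ) {L : List ℕ} {t : ℕ} {x b : ℤ}
    (hadj : pos L t b = pos L t x + 1) :
    valuesBetween w x b = {m ∈ valuesBetween w x b | pos L t m < pos L t x} ∪
      {m ∈ valuesBetween w x b | pos L t b < pos L t m} := by
  rw [← Set.sep_or]
  ext m
  refine (and_iff_left_of_imp fun hm ↦ ?_).symm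
  have hx := (pos_injective L t).ne (ne_of_apply_ne ⇑w⁻¹ hm.1.ne')
  have hb := (pos_injective L t).ne (ne_of_apply_ne ⇑w⁻¹ hm.2.ne)
  omega

/-- The boxes of the extended hook of `p` that lie in the row of `p`, other than `p`. -/
def arm (d r : ℕ) (p : ℤ × ℤ) : Set (ℤ × ℤ) :=
  {q ∈ Diagram d (Zlam d r) | q.1 = p.1 ∧ p.2 < q.2}

/-- The boxes of the extended hook of `p` that lie in lower rows than `p`: the part of its column
below it in the extended diagram, continued along row `d + 1 + c` when its column `c` is
negative. -/
def leg (d r : ℕ) (p : ℤ × ℤ) : Set (ℤ × ℤ) :=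
  {q ∈ ExtDiagram d (Zlam d r) | q.2 = p.2 ∧ p.1 < q.1} ∪
    {q ∈ Diagram d (Zlam d r) | p.2 < 0 ∧ q.1 = d + 1 + p.2}

/-- The column `c` with `colVal d r c = m`. -/
def valCol (d r : ℕ) (m : ℤ) : ℤ := if m < -d then -m - d else if m ≤ 0 then m else m + r

lemma colVal_valCol {d r : ℕ} {m : ℤ} (hm : -(d + r) ≤ m) : colVal d r (valCol d r m) = m := by
  simp only [colVal, valCol]
  split_ifs <;> omega

section Hook

variable {d r : ℕ} {w : Equiv.Perm ℤ} {p q : ℤ × ℤ}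

lemma extHook_eq (hp : p ∈ Diagram d (Zlam d r)) :
    ExtHook d (Zlam d r) p.1 p.2 = {p} ∪ (arm d r p ∪ leg d r p) := by
  rw [mem_diagram_Zlam] at hp
  ext q
  simp only [ExtHook, Hook, arm, leg, ExtDiagram, Set.mem_union, Set.mem_ofPred_eq,
    Set.mem_singleton_iff, mem_diagram_Zlam, Prod.ext_iff]
  omega

lemma disjoint_arm_leg (hp : p ∈ Diagram d (Zlam d r)) : Disjoint (arm d r p) (leg d r p) := by
  rw [mem_diagram_Zlam] at hp
  rw [Set.disjoint_left]
  rintro q ⟨-, hrow, -⟩ (⟨-, -, hlt⟩ | ⟨-, -, hrow'⟩) <;> omega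

lemma arm_subset_extDiagram : arm d r p ⊆ ExtDiagram d (Zlam d r) := fun _ hq ↦ .inl hq.1

lemma leg_subset_extDiagram : leg d r p ⊆ ExtDiagram d (Zlam d r) :=
  Set.union_subset (fun _ hq ↦ hq.1) fun _ hq ↦ .inl hq.1

lemma arm_bijOn (hw : IsWdr d r w) (hp : p ∈ Diagram d (Zlam d r)) :
    Set.BijOn (fun q ↦ colVal d r q.2) (arm d r p)
      {m ∈ valuesBetween w (rowVal d p.1) (colVal d r p.2) | m < rowVal d p.1} := by
  rw [valuesBetween, hw.inv_rowVal hp, hw.inv_colVal hp]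
  rw [mem_diagram_Zlam] at hp
  refine ⟨fun q hq ↦ ?_, fun q hq q' hq' h ↦ ?_, fun m hm ↦ ?_⟩
  · simp only [arm, Set.mem_ofPred_eq] at hq
    simp only [Set.mem_ofPred_eq, hw.inv_colVal hq.1]
    refine ⟨?_, hq.2.1 ▸ colVal_lt_rowVal hq.1⟩
    simp only [mem_diagram_Zlam, rowVal, Set.mem_Ioo] at hq ⊢
    split_ifs <;> omega
  · simp only [arm, Set.mem_ofPred_eq, mem_diagram_Zlam, colVal] at hq hq' h
    ext <;> split_ifs at h <;> omega
  · simp only [Set.mem_ofPred_eq, hw.inv_apply, Set.mem_Ioo, rowVal] at hm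
    refine ⟨(p.1, valCol d r m), ?_, colVal_valCol (by split_ifs at hm <;> omega)⟩
    simp only [arm, Set.mem_ofPred_eq, mem_diagram_Zlam, valCol, true_and]
    split_ifs at hm ⊢ <;> omega

/-- The signed index `m` for which a box `q` in the leg of a box of column `c` has label
`e_m - e_b`, where `b = colVal d r c`. In row `d + 1 + c` the label is `e_{-b} - e_{-m}`,
which is the same vector. -/
def legVal (d r : ℕ) (c : ℤ) (q : ℤ × ℤ) : ℤ :=
  if q.2 = c then rowVal d q.1 else -colVal d r q.2

lemma leg_bijOn (hw : IsWdr d r w) (hp : p ∈ Diagram d (Zlam d r)) :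
    Set.BijOn (legVal d r p.2) (leg d r p)
      {m ∈ valuesBetween w (rowVal d p.1) (colVal d r p.2) | colVal d r p.2 < m} := by
  rw [valuesBetween, hw.inv_rowVal hp, hw.inv_colVal hp]
  rw [mem_diagram_Zlam] at hp
  refine ⟨fun q hq ↦ ?_, fun q hq q' hq' h ↦ ?_, fun m hm ↦ ?_⟩
  · simp only [leg, ExtDiagram, Set.mem_union, Set.mem_ofPred_eq, mem_diagram_Zlam] at hq
    simp only [Set.mem_ofPred_eq, hw.inv_apply, Set.mem_Ioo, legVal, rowVal, colVal]
    split_ifs <;> omega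
  · simp only [leg, ExtDiagram, Set.mem_union, Set.mem_ofPred_eq, mem_diagram_Zlam, legVal, rowVal,
      colVal] at hq hq' h
    ext <;> split_ifs at h <;> omega
  · simp only [Set.mem_ofPred_eq, hw.inv_apply, Set.mem_Ioo, rowVal, colVal] at hm
    by_cases hcol : 0 ≤ p.2 ∨ -p.2 ≤ m ∧ m ≤ d
    · refine ⟨(d + 1 - m, p.2), ?_, ?_⟩
      · simp only [leg, ExtDiagram, Set.mem_union, Set.mem_ofPred_eq, mem_diagram_Zlam, true_and]
        split_ifs at hm <;> omega
      · rw [legVal, if_pos rfl, rowVal, sub_sub_cancel]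
    · have hcolumn : valCol d r (-m) ≠ p.2 := by
        rw [valCol]
        split_ifs at hm ⊢ <;> omega
      refine ⟨(d + 1 + p.2, valCol d r (-m)), .inr ?_, ?_⟩
      · simp only [Set.mem_ofPred_eq, mem_diagram_Zlam, and_true, valCol]
        split_ifs at hm ⊢ <;> omega
      · rw [legVal, if_neg hcolumn, colVal_valCol (by split_ifs at hm <;> omega), neg_neg]

lemma pos_legVal_lt_iff (L : List ℕ) (t : ℕ) (hq : q ∈ leg d r p) :
    pos L t (legVal d r p.2 q) < pos L t (colVal d r p.2) ↔
      pos L t (rowVal d q.1) < pos L t (colVal d r q.2) := by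
  by_cases hcol : q.2 = p.2
  · rw [legVal, if_pos hcol, hcol]
  · obtain ⟨-, hneg, hrow⟩ := hq.resolve_left fun h ↦ hcol h.2.1
    have hrowVal : rowVal d q.1 = -colVal d r p.2 := by
      rw [rowVal, colVal, if_pos hneg.le, hrow]; ring
    rw [legVal, if_neg hcol, hrowVal, ← pos_neg_lt_pos_neg_iff, neg_neg]

end Hook

/-! ### The filling of a reflection order -/

/-- `B` is the filling `B_a` of the word `a = L`: the entry of each box is the (1-indexed) place of
its label in the reflection order of `L`. -/
def IsReflOrderFilling (d r : ℕ) (L : List ℕ) (B : ℤ × ℤ → ℕ) : Prop :=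
  ∀ q ∈ Diagram d (Zlam d r), 1 ≤ B q ∧ reflOrder L (B q - 1) = fLabel d r q

namespace IsReflOrderFilling

variable {d r n : ℕ} {w : Equiv.Perm ℤ} {L : List ℕ} {B : ℤ × ℤ → ℕ} {p q : ℤ × ℤ}

lemma injOn (hB : IsReflOrderFilling d r L B) : Set.InjOn B (Diagram d (Zlam d r)) := by
  intro q hq q' hq' h
  exact fLabel_injOn d r hq hq' (by rw [← (hB q hq).2, ← (hB q' hq').2, h])

lemma isFilling (hB : IsReflOrderFilling d r L B)
    (hle : ∀ q ∈ Diagram d (Zlam d r), B q ≤ sizeP d (Zlam d r))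
    (hB0 : ∀ q ∉ Diagram d (Zlam d r), B q = 0) : IsFilling d (Zlam d r) B := by
  have hmaps : Set.MapsTo B (Diagram d (Zlam d r)) (Set.Icc 1 (sizeP d (Zlam d r))) :=
    fun q hq ↦ ⟨(hB q hq).1, hle q hq⟩
  have himage : B '' Diagram d (Zlam d r) = Set.Icc 1 (sizeP d (Zlam d r)) := by
    refine Set.eq_of_subset_of_ncard_le hmaps.image_subset ?_
    rw [hB.injOn.ncard_image, ncard_diagram, ← Finset.coe_Icc, Set.ncard_coe_finset,
      Nat.card_Icc, Nat.add_sub_cancel]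
  exact ⟨⟨hmaps, hB.injOn, himage.ge⟩, hB0⟩

lemma reflOrder_eq_sub (hB : IsReflOrderFilling d r L B) (hq : q ∈ Diagram d (Zlam d r)) :
    reflOrder L (B q - 1) = eVec (rowVal d q.1) - eVec (colVal d r q.2) := by
  rw [(hB q hq).2, fLabel_eq]

lemma le_length (hB : IsReflOrderFilling d r L B) (hw : IsWdr d r w) (hprod : wordProd L = w)
    (hq : q ∈ Diagram d (Zlam d r)) : B q ≤ L.length := by
  have := lt_length_of_reflOrder_eq hprod (hw.inv_rowVal_lt_inv_colVal hq) (hB.reflOrder_eq_sub hq)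
  omega

lemma pos_colVal_eq (hB : IsReflOrderFilling d r L B) (hw : IsWdr d r w) (hprod : wordProd L = w)
    (hq : q ∈ Diagram d (Zlam d r)) :
    pos L (B q) (colVal d r q.2) = pos L (B q) (rowVal d q.1) + 1 := by
  have hlt : B q - 1 < L.length :=
    lt_length_of_reflOrder_eq hprod (hw.inv_rowVal_lt_inv_colVal hq) (hB.reflOrder_eq_sub hq)
  have := pos_succ_of_reflOrder_eq hlt (hB.reflOrder_eq_sub hq)
  rwa [Nat.sub_add_cancel (hB q hq).1] at this

lemma pos_lt_pos_iff (hB : IsReflOrderFilling d r L B) (hw : IsWdr d r w)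
    (hL : IsReducedWord n w L) {t : ℕ} (ht : t ≤ L.length) (hq : q ∈ Diagram d (Zlam d r)) :
    pos L t (rowVal d q.1) < pos L t (colVal d r q.2) ↔ B q ≤ t := by
  rw [pos_lt_pos_iff_of_reflOrder_eq hL (colVal_lt_rowVal hq) (hw.inv_rowVal_lt_inv_colVal hq)
    (hB.reflOrder_eq_sub hq) ht, Nat.sub_add_cancel (hB q hq).1]

lemma pos_lt_pos_iff_extFilling (hB : IsReflOrderFilling d r L B) (hw : IsWdr d r w)
    (hL : IsReducedWord n w L) {t : ℕ} (ht : t ≤ L.length) (hq : q ∈ ExtDiagram d (Zlam d r)) :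
    pos L t (rowVal d q.1) < pos L t (colVal d r q.2) ↔ ExtFilling d B q ≤ t := by
  obtain hq | ⟨hpos, hle, hcol⟩ := hq
  · have hcol : q.2 ≠ q.1 - (d + 1) := by rw [mem_diagram_Zlam] at hq; omega
    rw [hB.pos_lt_pos_iff hw hL ht hq, ExtFilling, if_neg hcol]
  · have hmem : (q.1, 0) ∈ Diagram d (Zlam d r) := by simp only [mem_diagram_Zlam]; omega
    have hcolVal : colVal d r q.2 = -rowVal d q.1 := by
      rw [rowVal, colVal, if_pos (by omega), hcol]; ring
    rw [hcolVal, pos_lt_pos_neg_iff, ExtFilling, if_pos hcol]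
    exact hB.pos_lt_pos_iff hw hL ht hmem

section Counting

variable (hB : IsReflOrderFilling d r L B) (hw : IsWdr d r w) (hL : IsReducedWord n w L)
  (hp : p ∈ Diagram d (Zlam d r))
include hB hw hL hp

lemma arm_gt_bijOn :
    Set.BijOn (fun q ↦ colVal d r q.2) {q ∈ arm d r p | B p < ExtFilling d B q}
      {m ∈ valuesBetween w (rowVal d p.1) (colVal d r p.2) |
        pos L (B p) m < pos L (B p) (rowVal d p.1)} := by
  have hT := hB.le_length hw hL.2.1 hp
  have harm := arm_bijOn hw hp
  have hleft : {m ∈ valuesBetween w (rowVal d p.1) (colVal d r p.2) |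
      pos L (B p) m < pos L (B p) (rowVal d p.1)} ⊆
      {m ∈ valuesBetween w (rowVal d p.1) (colVal d r p.2) | m < rowVal d p.1} :=
    fun m hm ↦ ⟨hm.1, lt_of_pos_lt_of_inv_lt hL hT hm.2 hm.1.1⟩
  convert harm.subset_right hleft using 1
  ext q
  refine and_congr_right fun hq ↦ ?_
  have hm := harm.mapsTo hq
  rw [← not_le, ← hB.pos_lt_pos_iff_extFilling hw hL hT (arm_subset_extDiagram hq), hq.2.1,
    not_lt, Set.mem_preimage, Set.mem_ofPred_eq, and_iff_right hm.1]
  exact ((pos_injective L _).ne hm.2.ne).le_iff_lt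

lemma leg_gt_bijOn :
    Set.BijOn (legVal d r p.2) {q ∈ leg d r p | B p < ExtFilling d B q}
      {m ∈ valuesBetween w (rowVal d p.1) (colVal d r p.2) |
        pos L (B p) (colVal d r p.2) < pos L (B p) m} := by
  have hT := hB.le_length hw hL.2.1 hp
  have hleg := leg_bijOn hw hp
  have hright : {m ∈ valuesBetween w (rowVal d p.1) (colVal d r p.2) |
      pos L (B p) (colVal d r p.2) < pos L (B p) m} ⊆
      {m ∈ valuesBetween w (rowVal d p.1) (colVal d r p.2) | colVal d r p.2 < m} :=
    fun m hm ↦ ⟨hm.1, lt_of_pos_lt_of_inv_lt hL hT hm.2 hm.1.2⟩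
  convert hleg.subset_right hright using 1
  ext q
  refine and_congr_right fun hq ↦ ?_
  have hm := hleg.mapsTo hq
  rw [← not_le, ← hB.pos_lt_pos_iff_extFilling hw hL hT (leg_subset_extDiagram hq),
    ← pos_legVal_lt_iff L _ hq, not_lt, Set.mem_preimage, Set.mem_ofPred_eq, and_iff_right hm.1]
  exact ((pos_injective L _).ne hm.2.ne).le_iff_lt

lemma extHook_gt_eq : {q ∈ ExtHook d (Zlam d r) p.1 p.2 | B p < ExtFilling d B q} =
    {q ∈ arm d r p | B p < ExtFilling d B q} ∪ {q ∈ leg d r p | B p < ExtFilling d B q} := by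
  have hp_le : ExtFilling d B p ≤ B p := by
    rw [← hB.pos_lt_pos_iff_extFilling hw hL (hB.le_length hw hL.2.1 hp) (.inl hp),
      hB.pos_colVal_eq hw hL.2.1 hp]
    exact Int.lt_succ _
  rw [extHook_eq hp, ← Set.sep_union]
  ext q
  refine and_congr_left fun hq ↦ or_iff_right fun hqp ↦ ?_
  rw [Set.mem_singleton_iff.1 hqp] at hq
  exact hp_le.not_gt hq

lemma encard_extHook_gt :
    {q ∈ ExtHook d (Zlam d r) p.1 p.2 | B p < ExtFilling d B q}.encard =
      (valuesBetween w (rowVal d p.1) (colVal d r p.2)).encard := by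
  have hadj := hB.pos_colVal_eq hw hL.2.1 hp
  rw [hB.extHook_gt_eq hw hL hp, valuesBetween_eq_union w hadj, Set.encard_union_eq,
    Set.encard_union_eq, Set.encard_congr (hB.arm_gt_bijOn hw hL hp).equiv,
    Set.encard_congr (hB.leg_gt_bijOn hw hL hp).equiv]
  · rw [Set.disjoint_left]
    rintro m ⟨-, hleft⟩ ⟨-, hright⟩
    omega
  · exact (disjoint_arm_leg hp).mono (Set.sep_subset _ _) (Set.sep_subset _ _)

theorem ncard_extHook_gt :
    ({q ∈ ExtHook d (Zlam d r) p.1 p.2 | B p < ExtFilling d B q}.ncard : ℤ) =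
      rk d (Zlam d r) p.1 p.2 - 1 := by
  rw [Set.ncard, hB.encard_extHook_gt hw hL hp, ← Set.ncard,
    ncard_valuesBetween (hw.inv_rowVal_lt_inv_colVal hp), hw.rk_eq hp]

end Counting

end IsReflOrderFilling

/-- the filling of `D(Z(d,r))` obtained from the reflection order of a
reduced word of `w^{(d,r)}` (via `γ_{B(x)} = f(x)`) is a balanced shifted tableau. -/
theorem reduced_word_gives_balanced (d r : ℕ) (hd : 1 ≤ d)
    (w : Equiv.Perm ℤ) (hw : IsWdr d r w)
    (L : List ℕ) (hL : IsReducedWord (d + r) w L)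
    (B : ℤ × ℤ → ℕ)
    (hB0 : ∀ p : ℤ × ℤ, p ∉ Diagram d (Zlam d r) → B p = 0)
    (hB : ∀ p ∈ Diagram d (Zlam d r),
      1 ≤ B p ∧ B p ≤ sizeP d (Zlam d r) ∧ reflOrder L (B p - 1) = fLabel d r p) :
    IsBalanced d (Zlam d r) B := by
  have hBL : IsReflOrderFilling d r L B := fun p hp ↦ ⟨(hB p hp).1, (hB p hp).2.2⟩
  exact ⟨hBL.isFilling (fun p hp ↦ (hB p hp).2.1) hB0, fun p hp ↦ hBL.ncard_extHook_gt hw hL hp⟩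

end BST
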